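/- Let δ be the least ordinal with X_δ = X_{δ+1}. Then δ has uncountable cofinality; in particular, for every strictly increasing sequence ⟨α_n⟩_{n∈ℕ} of ordinals below δ one has sup_n α_n < δ. -/

import Mathlib

open Set Topology

noncomputable section

/-- A set is an `Fσ` set if it is a countable union of closed sets. -/
def IsFSigma {X : Type*} [TopologicalSpace X] (s : Set X) : Prop :=
  ∃ F : ℕ → Set X, (∀ n, IsClosed (F n)) ∧ s = ⋃ n, F n

/-- A topological space is an `F`-space if any two disjoint open `Fσ` subsets
have disjoint closures. -/
def IsFSpace (X : Type*) [TopologicalSpace X] : Prop :=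
  ∀ s t : Set X, IsOpen s → IsOpen t → IsFSigma s → IsFSigma t → Disjoint s t →
    Disjoint (closure s) (closure t)

/-- `𝐒 = ℕ × [0,1]²` where `ℕ` is discrete and `[0,1]` is the unit interval. -/
abbrev bS : Type := ℕ × (unitInterval × unitInterval)

/-- `βπ : β𝐒 → βℕ`, the Stone–Čech extension of the projection `π(n,x,y) = n`. -/
def betaPi : StoneCech bS → StoneCech ℕ :=
  stoneCechExtend (continuous_stoneCechUnit.comp continuous_fst)

/-- `βf : β𝐒 → [0,1]`, the Stone–Čech extension of `f(n,x,y) = x`. -/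
def betaF : StoneCech bS → unitInterval :=
  stoneCechExtend (continuous_fst.comp continuous_snd)

/-- `S_u = βπ⁻¹(u)`, as a subset of `β𝐒` (carrying the subspace topology). -/
def Su (u : StoneCech ℕ) : Set (StoneCech bS) := betaPi ⁻¹' {u}

/-- `f_u : S_u → [0,1]`, the restriction of `βf` to `S_u`. -/
def fu (u : StoneCech ℕ) : (Su u) → unitInterval := fun z => betaF z.1

/-- `L_t = f_u⁻¹(t) ∩ cl_{S_u} f_u⁻¹([0,t))`. -/
def Lset (u : StoneCech ℕ) (t : unitInterval) : Set (Su u) :=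
  fu u ⁻¹' {t} ∩ closure (fu u ⁻¹' (Set.Ico 0 t))

/-- `R_t = f_u⁻¹(t) ∩ cl_{S_u} f_u⁻¹((t,1])`. -/
def Rset (u : StoneCech ℕ) (t : unitInterval) : Set (Su u) :=
  fu u ⁻¹' {t} ∩ closure (fu u ⁻¹' (Set.Ioc t 1))

/-- The rectangle `P_{s,r} = S_u ∩ cl_{β𝐒}(ℕ × [s,r] × I)`, viewed as a subset of `S_u`. -/
def Pset (u : StoneCech ℕ) (s r : unitInterval) : Set (Su u) :=
  Subtype.val ⁻¹' closure (stoneCechUnit '' {p : bS | p.2.1 ∈ Set.Icc s r})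

/-- `L_{s,t} = cl_{S_u}(⋃_{s<r<t} P_{s,r})`. -/
def Lst (u : StoneCech ℕ) (s t : unitInterval) : Set (Su u) :=
  closure (⋃ r ∈ Set.Ioo s t, Pset u s r)

/-- The interior of `B` in the subspace `A`, viewed as a subset of the ambient space. -/
def relInt {Y : Type*} [TopologicalSpace Y] (A B : Set Y) : Set Y :=
  Subtype.val '' interior ((Subtype.val : A → Y) ⁻¹' B)

/-- The transfinite sequence `X_α ⊆ S_u`: `X_0 = S_u`,
`X_{α+1} = X_α \ ⋃_{t} Int_{X_α}(X_α ∩ f_u⁻¹(t))`, and `X_λ = ⋂_{β<λ} X_β` at limits. -/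
def Xseq (u : StoneCech ℕ) : Ordinal → Set (Su u) := fun α =>
  Ordinal.limitRecOn α Set.univ
    (fun _ Xa => Xa \ ⋃ t : unitInterval, relInt Xa (Xa ∩ fu u ⁻¹' {t}))
    (fun o _ ih => ⋂ (β : {β : Ordinal // β < o}), ih β.1 β.2)

/-- The bottom line `B_u = S_u ∩ cl_{β𝐒}(ℕ × I × {0})`, viewed as a subset of `S_u`. -/
def Bu (u : StoneCech ℕ) : Set (Su u) :=
  Subtype.val ⁻¹' closure (stoneCechUnit '' {p : bS | p.2.2 = 0})

/-- The top line `T_u = S_u ∩ cl_{β𝐒}(ℕ × I × {1})`, viewed as a subset of `S_u`. -/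
def Tu (u : StoneCech ℕ) : Set (Su u) :=
  Subtype.val ⁻¹' closure (stoneCechUnit '' {p : bS | p.2.2 = 1})

/-!
A tent map `k` of the interval acts on `S_u` through the `x`-coordinate. It has two continuous
inverse branches, so this action is open with finite fibres and pulls each `X_α` back to itself.
Since tent maps connect any two levels, a stage which removes a point at all removes points at
every level `t`.

Suppose that `δ ≠ 0` has countable cofinality, and let `α_n` be cofinal in `δ`. Choose points `x_n`
removed at stage `α_n` whose levels are nonzero and tend to `0` summably fast. A cluster point `y`
of `(x_n)` lies in `X_δ` at level `0`. A sum of Urysohn functions `g_n` with `g_n(x_n) = 1`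
and `g_n = 0` on `X_{α_n + 1}`, weighted by `f_u(x_n)`, produces a continuous `G ≥ 0` that vanishes
on `X_δ` and satisfies `f_u < 2 G` at all `x_n`. In an `F`-space the closures of `{f_u < 2 G}` and
`{2 G < f_u}` are disjoint, so `f_u` is zero on `X_δ` near `y`. Hence `y ∉ X_{δ+1}`, so `δ` is not
the stage at which the sequence stabilises. Finally `δ ≠ 0`: the Stone–Čech extension of
`(n, x, y) ↦ 1 / (1 + n x)` is nonzero somewhere on `S_u`, but vanishes wherever `f_u > 0`, so the
level set of `0` has interior points.
-/

open Filter

section FSpace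

variable {Y : Type*} [TopologicalSpace Y]

theorem isFSigma_setOf_lt {p q : Y → ℝ} (hp : Continuous p) (hq : Continuous q) :
    IsFSigma {z | p z < q z} := by
  refine ⟨fun n => {z | p z + 1 / ((n : ℝ) + 1) ≤ q z}, fun n => isClosed_le (by fun_prop) hq, ?_⟩
  ext z
  simp only [mem_ofPred_eq, mem_iUnion]
  constructor
  · intro hlt
    obtain ⟨n, hn⟩ := exists_nat_one_div_lt (sub_pos.2 hlt)
    exact ⟨n, by linarith⟩
  · rintro ⟨n, hn⟩
    have : 0 < 1 / ((n : ℝ) + 1) := by positivity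
    linarith

theorem IsFSpace.disjoint_closure_setOf_lt (hY : IsFSpace Y) {p q : Y → ℝ} (hp : Continuous p)
    (hq : Continuous q) : Disjoint (closure {z | p z < q z}) (closure {z | q z < p z}) :=
  hY _ _ (isOpen_lt hp hq) (isOpen_lt hq hp) (isFSigma_setOf_lt hp hq) (isFSigma_setOf_lt hq hp)
    (disjoint_left.2 fun z (hpq : p z < q z) (hqp : q z < p z) => lt_asymm hpq hqp)

theorem exists_continuous_le_apply_of_summable [T4Space Y] {ι : Type*} {x : ι → Y}
    {U : ι → Set Y} (hU : ∀ i, IsOpen (U i)) (hxU : ∀ i, x i ∈ U i) {c : ι → ℝ}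
    (hc : ∀ i, 0 ≤ c i) (hsum : Summable c) :
    ∃ G : Y → ℝ, Continuous G ∧ (∀ i, c i ≤ G (x i)) ∧ ∀ z ∉ ⋃ i, U i, G z = 0 := by
  have hurysohn (i : ι) : ∃ g : C(Y, ℝ), EqOn g 0 (U i)ᶜ ∧ EqOn g 1 {x i} ∧
      ∀ z, g z ∈ Icc (0 : ℝ) 1 :=
    exists_continuous_zero_one_of_isClosed (hU i).isClosed_compl isClosed_singleton
      (disjoint_singleton_right.2 (not_not_intro (hxU i)))
  choose g hg_zero hg_one hg_mem using hurysohn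
  have hterm_nonneg (i : ι) (z : Y) : 0 ≤ c i * g i z := mul_nonneg (hc i) (hg_mem i z).1
  have hterm_le (i : ι) (z : Y) : ‖c i * g i z‖ ≤ c i := by
    rw [Real.norm_of_nonneg (hterm_nonneg i z)]
    exact mul_le_of_le_one_right (hc i) (hg_mem i z).2
  refine ⟨fun z => ∑' i, c i * g i z, continuous_tsum (fun i => by fun_prop) hsum hterm_le,
    fun i => ?_, fun z hz => ?_⟩
  · calc
      c i = c i * g i (x i) := by rw [hg_one i rfl, Pi.one_apply, mul_one]
      _ ≤ ∑' j, c j * g j (x i) :=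
        (hsum.of_norm_bounded fun j => hterm_le j (x i)).le_tsum i fun j _ => hterm_nonneg j (x i)
  · have hterm_zero (i : ι) : c i * g i z = 0 := by
      rw [hg_zero i fun hzU => hz (mem_iUnion_of_mem i hzU), Pi.zero_apply, mul_zero]
    simp only [hterm_zero, tsum_zero]

theorem IsFSpace.eventually_mem_iUnion [T4Space Y] (hY : IsFSpace Y) {h : Y → ℝ}
    (hh : Continuous h) {ι : Type*} {x : ι → Y} (hpos : ∀ i, 0 < h (x i))
    (hsum : Summable fun i => h (x i)) {U : ι → Set Y} (hU : ∀ i, IsOpen (U i))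
    (hxU : ∀ i, x i ∈ U i) {y : Y} (hy : y ∈ closure (range x)) :
    ∀ᶠ z in 𝓝 y, 0 < h z → z ∈ ⋃ i, U i := by
  obtain ⟨G, hG, hG_ge, hG_zero⟩ :=
    exists_continuous_le_apply_of_summable hU hxU (fun i => (hpos i).le) hsum
  have hdisj : Disjoint (closure {z | h z < 2 * G z}) (closure {z | 2 * G z < h z}) :=
    hY.disjoint_closure_setOf_lt hh (by fun_prop)
  have hrange : range x ⊆ {z | h z < 2 * G z} := by
    rintro _ ⟨i, rfl⟩
    change h (x i) < 2 * G (x i)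
    linarith [hpos i, hG_ge i]
  have hy_notMem : y ∉ closure {z | 2 * G z < h z} :=
    disjoint_left.1 hdisj (closure_mono hrange hy)
  filter_upwards [isClosed_closure.isOpen_compl.mem_nhds hy_notMem] with z hz hz_pos
  by_contra hzU
  refine hz (subset_closure ?_)
  rwa [mem_ofPred_eq, hG_zero z hzU, mul_zero]

end FSpace

section LevelDerivative

variable {Y Y' Z Z' : Type*} [TopologicalSpace Y] [TopologicalSpace Y']

/-- The derivative of `A` along `f`: the points of `A` near which `f` is not constant on `A`. One
step of the recursion defining `X_α` is `A ↦ levelDeriv f_u A`. -/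
def levelDeriv (f : Y → Z) (A : Set Y) : Set Y :=
  {x ∈ A | ∃ᶠ z in 𝓝[A] x, f z ≠ f x}

/-- The iterated derivatives of the whole space along `f`. The closed formula
`X_α = ⋂_{β < α} (X_β)'` treats zero, successor and limit stages alike. -/
def levelDerivSeq (f : Y → Z) (α : Ordinal) : Set Y :=
  ⋂ β : Iio α, levelDeriv f (levelDerivSeq f β)
termination_by α
decreasing_by exact β.2

/-- The values of `f` at the points removed in passing from `X_α` to `X_{α+1}`. -/
def removedLevels (f : Y → Z) (α : Ordinal) : Set Z :=
  f '' (levelDerivSeq f α \ levelDerivSeq f (α + 1))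

theorem mem_relInt {A B : Set Y} {x : Y} : x ∈ relInt A B ↔ x ∈ A ∧ ∀ᶠ z in 𝓝[A] x, z ∈ B := by
  simp only [relInt, mem_image, Subtype.exists, exists_and_right, exists_eq_right,
    mem_interior_iff_mem_nhds, preimage_coe_mem_nhds_subtype, exists_prop]
  rfl

theorem sdiff_iUnion_relInt (f : Y → Z) (A : Set Y) :
    A \ ⋃ t, relInt A (A ∩ f ⁻¹' {t}) = levelDeriv f A := by
  ext x
  simp only [levelDeriv, Set.mem_sdiff, mem_iUnion, mem_relInt, mem_ofPred_eq, not_exists, not_and]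
  refine and_congr_right fun hx => ⟨fun h hconst => ?_, fun h t _ hconst => h ?_⟩
  · refine h (f x) hx ?_
    filter_upwards [hconst, self_mem_nhdsWithin] with z hz hzA using ⟨hzA, not_not.1 hz⟩
  · have hfx : f x = t := (hconst.self_of_nhdsWithin hx).2
    filter_upwards [hconst] with z hz using not_not.2 (hz.2.trans hfx.symm)

variable {f : Y → Z} {A B : Set Y}

theorem levelDeriv_subset : levelDeriv f A ⊆ A :=
  sep_subset _ _

theorem levelDeriv_mono (h : A ⊆ B) : levelDeriv f A ⊆ levelDeriv f B :=
  fun _ hx => ⟨h hx.1, hx.2.filter_mono (nhdsWithin_mono _ h)⟩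

theorem isClosed_levelDeriv (hA : IsClosed A) : IsClosed (levelDeriv f A) := by
  refine isClosed_of_closure_subset fun x hx => ?_
  have hxA : x ∈ A := closure_minimal levelDeriv_subset hA hx
  refine ⟨hxA, fun hconst => ?_⟩
  have hfreq : ∃ᶠ w in 𝓝[A] x, w ∈ levelDeriv f A := by
    rw [frequently_nhdsWithin_iff]
    exact (mem_closure_iff_frequently.1 hx).mono fun w hw => ⟨hw, hw.1⟩
  obtain ⟨w, hw, hw_const, hwx⟩ :=
    (hfreq.and_eventually ((eventually_eventually_nhdsWithin.2 hconst).and hconst)).exists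
  refine hw.2 (hw_const.mono fun z hz => ?_)
  rw [not_not.1 hwx]
  exact hz

theorem mem_levelDerivSeq {α : Ordinal} {x : Y} :
    x ∈ levelDerivSeq f α ↔ ∀ β < α, x ∈ levelDeriv f (levelDerivSeq f β) := by
  rw [levelDerivSeq, mem_iInter, Subtype.forall]
  rfl

theorem levelDerivSeq_antitone (f : Y → Z) : Antitone (levelDerivSeq f) :=
  fun _ _ hle _ hx => mem_levelDerivSeq.2 fun γ hγ => mem_levelDerivSeq.1 hx γ (hγ.trans_le hle)

theorem levelDerivSeq_zero (f : Y → Z) : levelDerivSeq f 0 = univ :=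
  eq_univ_of_forall fun _ => mem_levelDerivSeq.2 fun β hβ => absurd hβ (not_lt_zero (a := β))

theorem levelDerivSeq_add_one (f : Y → Z) (α : Ordinal) :
    levelDerivSeq f (α + 1) = levelDeriv f (levelDerivSeq f α) := by
  ext x
  refine ⟨fun hx => mem_levelDerivSeq.1 hx α (lt_add_one α),
    fun hx => mem_levelDerivSeq.2 fun β hβ => ?_⟩
  exact levelDeriv_mono (levelDerivSeq_antitone f (Order.lt_add_one_iff.1 hβ)) hx

theorem levelDerivSeq_of_isSuccLimit (f : Y → Z) {α : Ordinal} (hα : Order.IsSuccLimit α) :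
    levelDerivSeq f α = ⋂ β : Iio α, levelDerivSeq f β := by
  refine Subset.antisymm (subset_iInter fun β => levelDerivSeq_antitone f β.2.le) fun x hx => ?_
  refine mem_levelDerivSeq.2 fun β hβ => ?_
  rw [← levelDerivSeq_add_one]
  exact mem_iInter.1 hx ⟨β + 1, hα.add_one_lt hβ⟩

theorem isClosed_levelDerivSeq (f : Y → Z) (α : Ordinal) : IsClosed (levelDerivSeq f α) := by
  induction α using WellFoundedLT.induction with
  | ind α ih =>
    rw [levelDerivSeq]
    exact isClosed_iInter fun β => isClosed_levelDeriv (ih β β.2)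

theorem removedLevels_nonempty_iff {α : Ordinal} :
    (removedLevels f α).Nonempty ↔ levelDerivSeq f α ≠ levelDerivSeq f (α + 1) := by
  have hsubset : levelDerivSeq f (α + 1) ⊆ levelDerivSeq f α :=
    levelDerivSeq_antitone f (lt_add_one α).le
  rw [removedLevels, image_nonempty, sdiff_nonempty]
  exact not_congr ⟨fun h => h.antisymm hsubset, Eq.subset⟩

section Semiconj

variable [TopologicalSpace Z] {f' : Y' → Z'} {φ : Y → Y'} {k : Z → Z'}

theorem preimage_levelDeriv (hf : Continuous f) (hφ : Continuous φ) (hφ_open : IsOpenMap φ)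
    (hk : ∀ s, ∀ᶠ r in 𝓝 s, k r = k s → r = s) (hsemi : ∀ y, f' (φ y) = k (f y)) (A : Set Y') :
    φ ⁻¹' levelDeriv f' A = levelDeriv f (φ ⁻¹' A) := by
  ext x
  refine and_congr_right fun _ => ?_
  have hmap : map φ (𝓝[φ ⁻¹' A] x) = 𝓝[A] (φ x) := by
    rw [nhdsWithin, map_inf_principal_preimage, hφ_open.map_nhds_eq hφ.continuousAt, nhdsWithin]
  have hne_iff : ∀ᶠ z in 𝓝[φ ⁻¹' A] x, f' (φ z) ≠ f' (φ x) ↔ f z ≠ f x := by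
    filter_upwards [mem_nhdsWithin_of_mem_nhds (hf.continuousAt.eventually (hk (f x)))] with z hz
    rw [hsemi, hsemi]
    exact not_congr ⟨hz, congrArg k⟩
  rw [← hmap, frequently_map, frequently_congr hne_iff]

theorem preimage_levelDerivSeq (hf : Continuous f) (hφ : Continuous φ) (hφ_open : IsOpenMap φ)
    (hk : ∀ s, ∀ᶠ r in 𝓝 s, k r = k s → r = s) (hsemi : ∀ y, f' (φ y) = k (f y)) (α : Ordinal) :
    φ ⁻¹' levelDerivSeq f' α = levelDerivSeq f α := by
  induction α using WellFoundedLT.induction with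
  | ind α ih =>
    rw [levelDerivSeq, levelDerivSeq, preimage_iInter]
    refine iInter_congr fun β => ?_
    rw [preimage_levelDeriv hf hφ hφ_open hk hsemi, ih β β.2]

theorem preimage_removedLevels (hf : Continuous f) (hφ : Continuous φ) (hφ_open : IsOpenMap φ)
    (hk : ∀ s, ∀ᶠ r in 𝓝 s, k r = k s → r = s) (hsemi : ∀ y, f' (φ y) = k (f y))
    (hlift : ∀ y s, f' y = k s → ∃ x, φ x = y ∧ f x = s) (α : Ordinal) :
    k ⁻¹' removedLevels f' α = removedLevels f α := by
  have hremoved : φ ⁻¹' (levelDerivSeq f' α \ levelDerivSeq f' (α + 1)) =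
      levelDerivSeq f α \ levelDerivSeq f (α + 1) := by
    rw [preimage_sdiff, preimage_levelDerivSeq hf hφ hφ_open hk hsemi,
      preimage_levelDerivSeq hf hφ hφ_open hk hsemi]
  ext s
  rw [removedLevels, removedLevels, ← hremoved]
  constructor
  · rintro ⟨y, hy, hys⟩
    obtain ⟨x, rfl, hxs⟩ := hlift y s hys
    exact ⟨x, hy, hxs⟩
  · rintro ⟨x, hx, rfl⟩
    exact ⟨φ x, hx, hsemi x⟩

end Semiconj

end LevelDerivative

section Cofinality

open Cardinal

theorem exists_monotone_isCofinal_range {α : Type*} [SemilatticeSup α] [Nonempty α]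
    (h : Order.cof α ≤ ℵ₀) : ∃ a : ℕ → α, Monotone a ∧ IsCofinal (range a) := by
  obtain ⟨s, hs, hs_card⟩ := Order.exists_cof_eq α
  rw [← hs_card, le_aleph0_iff_set_countable] at h
  obtain ⟨b, rfl⟩ := h.exists_eq_range hs.nonempty
  refine ⟨partialSups b, (partialSups b).monotone, fun x => ?_⟩
  obtain ⟨_, ⟨n, rfl⟩, hn⟩ := hs x
  exact ⟨_, ⟨n, rfl⟩, hn.trans (le_partialSups b n)⟩

theorem exists_monotone_isCofinal_range_Iio {δ : Ordinal} (hδ : δ ≠ 0) (h : δ.cof ≤ ℵ₀) :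
    ∃ a : ℕ → Iio δ, Monotone a ∧ IsCofinal (range a) := by
  have : Nonempty (Iio δ) := ⟨0, pos_iff_ne_zero.2 hδ⟩
  refine exists_monotone_isCofinal_range ?_
  rwa [Ordinal.cof_Iio, ← Ordinal.lift_cof, lift_le_aleph0]

variable {Y Z : Type*} [TopologicalSpace Y] {f : Y → Z} {δ : Ordinal}

theorem mem_levelDerivSeq_of_mapClusterPt {a : ℕ → Iio δ} (ha : Monotone a)
    (ha_cofinal : IsCofinal (range a)) {x : ℕ → Y} (hx : ∀ n, x n ∈ levelDerivSeq f (a n)) {y : Y}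
    (hy : MapClusterPt y atTop x) (hne : ∀ n, f (x n) ≠ f y) : y ∈ levelDerivSeq f δ := by
  refine mem_levelDerivSeq.2 fun β hβ => ?_
  obtain ⟨_, ⟨N, rfl⟩, hN⟩ := ha_cofinal ⟨β, hβ⟩
  have hx_mem : ∀ᶠ n in atTop, x n ∈ levelDerivSeq f β :=
    (eventually_ge_atTop N).mono fun n hn => levelDerivSeq_antitone f (hN.trans (ha hn)) (hx n)
  have hfreq {p : Y → Prop} (hp : ∀ᶠ z in 𝓝 y, p z) : ∃ n, p (x n) ∧ x n ∈ levelDerivSeq f β :=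
    ((hy.frequently hp).and_eventually hx_mem).exists
  constructor
  · rw [← (isClosed_levelDerivSeq f β).closure_eq, mem_closure_iff_nhds]
    intro V hV
    obtain ⟨n, hnV, hn⟩ := hfreq hV
    exact ⟨x n, hnV, hn⟩
  · intro hconst
    obtain ⟨n, hn_const, hn⟩ := hfreq (eventually_nhdsWithin_iff.1 hconst)
    exact hn_const hn (hne n)

theorem exists_seq_mem_removedLevels [PseudoMetricSpace Z] {a : ℕ → Ordinal} {c : Z}
    (hacc : ∀ n, AccPt c (𝓟 (removedLevels f (a n)))) :
    ∃ x : ℕ → Y, (∀ n, x n ∈ levelDerivSeq f (a n) \ levelDerivSeq f (a n + 1)) ∧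
      (∀ n, f (x n) ≠ c) ∧ Summable fun n => dist (f (x n)) c := by
  have hex (n : ℕ) : ∃ x ∈ levelDerivSeq f (a n) \ levelDerivSeq f (a n + 1),
      f x ≠ c ∧ dist (f x) c < (1 / 2) ^ n := by
    obtain ⟨_, ⟨hball, x, hx, rfl⟩, hne⟩ :=
      accPt_iff_nhds.1 (hacc n) _ (Metric.ball_mem_nhds c (ε := (1 / 2) ^ n) (by positivity))
    exact ⟨x, hx, hne, hball⟩
  choose x hx hne hdist using hex
  exact ⟨x, hx, hne, summable_geometric_two.of_nonneg_of_le (fun _ => dist_nonneg)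
    fun n => (hdist n).le⟩

variable [MetricSpace Z]

theorem IsFSpace.notMem_levelDeriv [T4Space Y] (hY : IsFSpace Y) (hf : Continuous f) {ι : Type*}
    {D : ι → Set Y} (hD : ∀ i, IsClosed (D i)) {x : ι → Y} (hxD : ∀ i, x i ∉ D i) {y : Y}
    (hy : y ∈ closure (range x)) (hne : ∀ i, f (x i) ≠ f y)
    (hsum : Summable fun i => dist (f (x i)) (f y)) {B : Set Y} (hB : ∀ i, B ⊆ D i) :
    y ∉ levelDeriv f B := by
  have hcover : ∀ᶠ z in 𝓝 y, 0 < dist (f z) (f y) → z ∈ ⋃ i, (D i)ᶜ :=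
    hY.eventually_mem_iUnion (h := fun z => dist (f z) (f y)) (by fun_prop)
      (fun i => dist_pos.2 (hne i)) hsum (fun i => (hD i).isOpen_compl) hxD hy
  rintro ⟨-, hnonconst⟩
  refine hnonconst (eventually_nhdsWithin_iff.2 (hcover.mono fun z hz hzB hzy => ?_))
  obtain ⟨i, hi⟩ := mem_iUnion.1 (hz (dist_pos.2 hzy))
  exact hi (hB i hzB)

theorem IsFSpace.levelDerivSeq_ne_add_one [CompactSpace Y] [T2Space Y] (hY : IsFSpace Y)
    (hf : Continuous f) {a : ℕ → Iio δ} (ha : Monotone a) (ha_cofinal : IsCofinal (range a)) {c : Z}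
    (hacc : ∀ n, AccPt c (𝓟 (removedLevels f (a n)))) :
    levelDerivSeq f δ ≠ levelDerivSeq f (δ + 1) := by
  obtain ⟨x, hx, hne, hsum⟩ := exists_seq_mem_removedLevels hacc
  obtain ⟨y, hy⟩ : ∃ y, MapClusterPt y atTop x := exists_clusterPt_of_compactSpace _
  have hlim : Tendsto (f ∘ x) atTop (𝓝 c) :=
    tendsto_iff_dist_tendsto_zero.2 hsum.tendsto_atTop_zero
  obtain rfl : f y = c :=
    eq_of_nhds_neBot ((hy.continuousAt_comp hf.continuousAt).neBot.mono (inf_le_inf_left _ hlim))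
  have hy_mem : y ∈ levelDerivSeq f δ :=
    mem_levelDerivSeq_of_mapClusterPt ha ha_cofinal (fun n => (hx n).1) hy hne
  have hy_notMem : y ∉ levelDeriv f (levelDerivSeq f δ) :=
    hY.notMem_levelDeriv hf (fun n => isClosed_levelDerivSeq f (a n + 1)) (fun n => (hx n).2)
      (mem_closure_iff_clusterPt.2 (hy.clusterPt.mono (by simp))) hne hsum
      (fun n => levelDerivSeq_antitone f (Order.add_one_le_of_lt (a n).2))
  rw [levelDerivSeq_add_one]
  exact fun heq => hy_notMem (heq ▸ hy_mem)

theorem IsFSpace.aleph0_lt_cof [CompactSpace Y] [T2Space Y] (hY : IsFSpace Y) (hf : Continuous f)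
    (hδ : δ ≠ 0) (hstable : levelDerivSeq f δ = levelDerivSeq f (δ + 1)) {c : Z}
    (hacc : ∀ β < δ, AccPt c (𝓟 (removedLevels f β))) : ℵ₀ < δ.cof := by
  by_contra! hcof
  obtain ⟨a, ha, ha_cofinal⟩ := exists_monotone_isCofinal_range_Iio hδ hcof
  exact hY.levelDerivSeq_ne_add_one hf ha ha_cofinal (fun n => hacc _ (a n).2) hstable

end Cofinality

section InverseBranches

/-- The maps `σ i` are sections of `φ` whose ranges cover the domain of `φ`, like the monotone
branches of the inverse of a piecewise monotone map of the interval. -/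
structure IsInverseBranches {Y W ι : Type*} (φ : Y → W) (σ : ι → W → Y) : Prop where
  rightInverse : ∀ i, Function.RightInverse (σ i) φ
  exists_apply_eq : ∀ y, ∃ i, σ i (φ y) = y

namespace IsInverseBranches

variable {Y W ι : Type*} [TopologicalSpace Y] {φ : Y → W} {σ : ι → W → Y}

theorem isOpenMap [TopologicalSpace W] (h : IsInverseBranches φ σ) (hσ : ∀ i, Continuous (σ i)) :
    IsOpenMap φ :=
  IsOpenMap.of_sections fun y =>
    let ⟨i, hi⟩ := h.exists_apply_eq y
    ⟨σ i, (hσ i).continuousAt, hi, h.rightInverse i⟩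

theorem eventually_eq_of_apply_eq [T1Space Y] [Finite ι] (h : IsInverseBranches φ σ) (y : Y) :
    ∀ᶠ z in 𝓝 y, φ z = φ y → z = y := by
  have hfiber : (φ ⁻¹' {φ y}).Finite :=
    (finite_range fun i => σ i (φ y)).subset fun z hz => by
      obtain ⟨i, hi⟩ := h.exists_apply_eq z
      exact ⟨i, by rwa [← show φ z = φ y from hz]⟩
  have hpunctured : ∀ᶠ z in 𝓝[≠] y, z ∉ φ ⁻¹' {φ y} :=
    nhdsNE_le_cofinite y hfiber.compl_mem_cofinite
  filter_upwards [eventually_nhdsWithin_iff.1 hpunctured] with z hz hzy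
  by_contra hne
  exact hz hne hzy

end IsInverseBranches

end InverseBranches

section TentMap

open unitInterval

/-- The tent map of the unit interval with peak at `a`, used for `0 < a < 1`. For `a = 0` or `a = 1`
one of the quotients is `0` because of division by zero. -/
def tentMap (a : I) : C(I, I) where
  toFun x := ⟨min ((x : ℝ) / a) ((1 - x) / (1 - a)), by
    have hx := x.2
    have ha := a.2
    refine ⟨le_min (div_nonneg hx.1 ha.1) (div_nonneg (sub_nonneg.2 hx.2) (sub_nonneg.2 ha.2)), ?_⟩
    rcases le_total x a with h | h
    · exact (min_le_left _ _).trans (div_le_one_of_le₀ h ha.1)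
    · exact (min_le_right _ _).trans
        (div_le_one_of_le₀ (sub_le_sub_left (show (a : ℝ) ≤ x from h) 1) (sub_nonneg.2 ha.2))⟩
  continuous_toFun := by fun_prop

/-- The increasing and the decreasing inverse branch of `tentMap a`. -/
def tentBranch (a : I) : Bool → C(I, I)
  | false => ⟨fun v => a * v, by fun_prop⟩
  | true => ⟨fun v => σ (σ a * v), by fun_prop⟩

theorem coe_tentMap (a x : I) :
    (tentMap a x : ℝ) = min ((x : ℝ) / a) ((1 - x) / (1 - a)) :=
  rfl

theorem tentMap_symm_symm (a x : I) : tentMap (σ a) (σ x) = tentMap a x :=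
  Subtype.ext (by simp [coe_tentMap, min_comm])

theorem tentMap_one (a : I) : tentMap a 1 = 0 :=
  Subtype.ext (by simp [coe_tentMap, a.2.1])

variable {a : I}

theorem coe_tentMap_of_le (h0 : 0 < a) (h1 : a < 1) {x : I} (hx : x ≤ a) :
    (tentMap a x : ℝ) = x / a := by
  have h0' : (0 : ℝ) < a := h0
  have h1' : (0 : ℝ) < 1 - a := sub_pos.2 h1
  have hx' : (x : ℝ) ≤ a := hx
  rw [coe_tentMap, min_eq_left]
  rw [div_le_div_iff₀ h0' h1']
  linarith

theorem tentMap_mul (h0 : 0 < a) (h1 : a < 1) (v : I) : tentMap a (a * v) = v := by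
  apply Subtype.ext
  rw [coe_tentMap_of_le h0 h1 mul_le_left, Icc.coe_mul]
  exact mul_div_cancel_left₀ _ (coe_pos.2 h0).ne'

theorem mul_tentMap_of_le (h0 : 0 < a) (h1 : a < 1) {x : I} (hx : x ≤ a) :
    a * tentMap a x = x := by
  apply Subtype.ext
  rw [Icc.coe_mul, coe_tentMap_of_le h0 h1 hx]
  exact mul_div_cancel₀ _ (coe_pos.2 h0).ne'

theorem isInverseBranches_tentMap (h0 : 0 < a) (h1 : a < 1) :
    IsInverseBranches (tentMap a) fun i => tentBranch a i := by
  have h0' : 0 < σ a := pos_iff_ne_zero.2 (by simpa [symm_eq_zero] using h1.ne)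
  have h1' : σ a < 1 := unitInterval.lt_one_iff_ne_one.2 (by simpa using h0.ne')
  constructor
  · rintro (_ | _) v
    · exact tentMap_mul h0 h1 v
    · change tentMap a (σ (σ a * v)) = v
      rw [← tentMap_symm_symm, symm_symm, tentMap_mul h0' h1']
  · intro x
    rcases le_total x a with hx | hx
    · exact ⟨false, mul_tentMap_of_le h0 h1 hx⟩
    · refine ⟨true, ?_⟩
      change σ (σ a * tentMap a x) = x
      rw [← tentMap_symm_symm, mul_tentMap_of_le h0' h1' (symm_le_symm.2 hx), symm_symm]

theorem eq_univ_of_preimage_tentMap_eq {T : Set I}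
    (hT : ∀ a : I, 0 < a → a < 1 → tentMap a ⁻¹' T = T) (hne : T.Nonempty) : T = univ := by
  have hmem {a : I} (h0 : 0 < a) (h1 : a < 1) (s : I) : s ∈ T ↔ tentMap a s ∈ T :=
    (Set.ext_iff.1 (hT a h0 h1) s).symm
  have hone (s : I) : s ∈ T ↔ 1 ∈ T := by
    rcases eq_or_ne s 1 with rfl | hs1
    · rfl
    rcases eq_or_ne s 0 with rfl | hs0
    · obtain ⟨m, hm0, hm1⟩ := exists_between (zero_lt_one (α := I))
      rw [hmem hm0 hm1 1, tentMap_one]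
    · have h0 := pos_iff_ne_zero.2 hs0
      have h1 := unitInterval.lt_one_iff_ne_one.2 hs1
      rw [hmem h0 h1 s, ← tentMap_mul h0 h1 1, mul_one]
  obtain ⟨s, hs⟩ := hne
  exact eq_univ_of_forall fun t => (hone t).2 ((hone s).1 hs)

end TentMap

section Fiber

open unitInterval

theorem continuous_betaPi : Continuous betaPi :=
  continuous_stoneCechExtend _

theorem continuous_betaF : Continuous betaF :=
  continuous_stoneCechExtend _

theorem betaPi_stoneCechUnit (p : bS) : betaPi (stoneCechUnit p) = stoneCechUnit p.1 :=
  stoneCechExtend_stoneCechUnit _ p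

theorem betaF_stoneCechUnit (p : bS) : betaF (stoneCechUnit p) = p.2.1 :=
  stoneCechExtend_stoneCechUnit _ p

theorem continuous_fu (u : StoneCech ℕ) : Continuous (fu u) :=
  continuous_betaF.comp continuous_subtype_val

theorem Xseq_eq_levelDerivSeq (u : StoneCech ℕ) (α : Ordinal) :
    Xseq u α = levelDerivSeq (fu u) α := by
  induction α using Ordinal.limitRecOn with
  | zero => rw [levelDerivSeq_zero, Xseq, Ordinal.limitRecOn_zero]
  | add_one α ih =>
    rw [levelDerivSeq_add_one, ← ih, ← sdiff_iUnion_relInt, Xseq, Ordinal.limitRecOn_add_one]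
    rfl
  | limit α hα ih =>
    rw [levelDerivSeq_of_isSuccLimit _ hα, Xseq, Ordinal.limitRecOn_limit _ _ _ _ hα]
    exact iInter_congr fun β => ih β β.2

/-- The Stone–Čech extension of `(n, x, y) ↦ (n, k x, y)`. -/
def betaMap (k : C(I, I)) : StoneCech bS → StoneCech bS :=
  stoneCechExtend (g := fun p : bS => stoneCechUnit ((p.1, k p.2.1, p.2.2) : bS))
    (continuous_stoneCechUnit.comp (by fun_prop))

theorem continuous_betaMap (k : C(I, I)) : Continuous (betaMap k) :=
  continuous_stoneCechExtend _

theorem betaMap_stoneCechUnit (k : C(I, I)) (p : bS) :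
    betaMap k (stoneCechUnit p) = stoneCechUnit (p.1, k p.2.1, p.2.2) :=
  stoneCechExtend_stoneCechUnit _ p

theorem betaPi_betaMap (k : C(I, I)) (w : StoneCech bS) : betaPi (betaMap k w) = betaPi w := by
  refine congrFun (stoneCech_hom_ext (continuous_betaPi.comp (continuous_betaMap k))
    continuous_betaPi (funext fun p => ?_)) w
  simp [betaMap_stoneCechUnit, betaPi_stoneCechUnit]

theorem betaF_betaMap (k : C(I, I)) (w : StoneCech bS) : betaF (betaMap k w) = k (betaF w) := by
  refine congrFun (stoneCech_hom_ext (continuous_betaF.comp (continuous_betaMap k))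
    (k.continuous.comp continuous_betaF) (funext fun p => ?_)) w
  simp [betaMap_stoneCechUnit, betaF_stoneCechUnit]

theorem isInverseBranches_betaMap {ι : Type*} [Finite ι] {k : C(I, I)} {j : ι → C(I, I)}
    (h : IsInverseBranches k fun i => j i) :
    IsInverseBranches (betaMap k) fun i => betaMap (j i) := by
  constructor
  · intro i w
    refine congrFun (stoneCech_hom_ext ((continuous_betaMap k).comp (continuous_betaMap (j i)))
      continuous_id (funext fun p => ?_)) w
    simp [betaMap_stoneCechUnit, h.rightInverse i p.2.1]
  · intro w
    refine denseRange_stoneCechUnit.induction_on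
      (p := fun w => ∃ i, betaMap (j i) (betaMap k w) = w) w ?_ fun p => ?_
    · rw [ofPred_exists]
      exact isClosed_iUnion_of_finite fun i =>
        isClosed_eq ((continuous_betaMap (j i)).comp (continuous_betaMap k)) continuous_id
    · obtain ⟨i, hi⟩ := h.exists_apply_eq p.2.1
      exact ⟨i, by simp [betaMap_stoneCechUnit, hi]⟩

/-- The restriction of `betaMap k` to `S_u`. -/
def fiberMap (u : StoneCech ℕ) (k : C(I, I)) : Su u → Su u :=
  MapsTo.restrict (betaMap k) (Su u) (Su u) fun w hw => (betaPi_betaMap k w).trans hw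

theorem continuous_fiberMap (u : StoneCech ℕ) (k : C(I, I)) : Continuous (fiberMap u k) :=
  (continuous_betaMap k).restrict _

theorem fu_fiberMap (u : StoneCech ℕ) (k : C(I, I)) (z : Su u) :
    fu u (fiberMap u k z) = k (fu u z) :=
  betaF_betaMap k z

variable {u : StoneCech ℕ}

theorem isInverseBranches_fiberMap {ι : Type*} [Finite ι] {k : C(I, I)} {j : ι → C(I, I)}
    (h : IsInverseBranches k fun i => j i) :
    IsInverseBranches (fiberMap u k) fun i => fiberMap u (j i) where
  rightInverse i z := Subtype.ext ((isInverseBranches_betaMap h).rightInverse i z)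
  exists_apply_eq z :=
    ((isInverseBranches_betaMap h).exists_apply_eq z).imp fun _ hi => Subtype.ext hi

theorem preimage_removedLevels_fu {ι : Type*} [Finite ι] {k : C(I, I)} {j : ι → C(I, I)}
    (h : IsInverseBranches k fun i => j i) (α : Ordinal) :
    k ⁻¹' removedLevels (fu u) α = removedLevels (fu u) α := by
  have hfiber : IsInverseBranches (fiberMap u k) fun i => fiberMap u (j i) :=
    isInverseBranches_fiberMap h
  refine preimage_removedLevels (continuous_fu u) (continuous_fiberMap u k)
    (hfiber.isOpenMap fun i => continuous_fiberMap u (j i)) h.eventually_eq_of_apply_eq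
    (fu_fiberMap u k) (fun z s hz => ?_) α
  obtain ⟨i, hi⟩ := h.exists_apply_eq s
  exact ⟨fiberMap u (j i) z, hfiber.rightInverse i z, by rw [fu_fiberMap, hz, hi]⟩

theorem removedLevels_fu_eq_univ {α : Ordinal}
    (h : levelDerivSeq (fu u) α ≠ levelDerivSeq (fu u) (α + 1)) :
    removedLevels (fu u) α = univ :=
  eq_univ_of_preimage_tentMap_eq
    (fun _ h0 h1 => preimage_removedLevels_fu (isInverseBranches_tentMap h0 h1) α)
    (removedLevels_nonempty_iff.2 h)

theorem mem_of_mem_Su_of_forall_le (hu : ∀ n, u ≠ stoneCechUnit n) {C : Set (StoneCech bS)}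
    (hC : IsClosed C) {N : ℕ} (hN : ∀ p : bS, N ≤ p.1 → stoneCechUnit p ∈ C) {w : StoneCech bS}
    (hw : w ∈ Su u) : w ∈ C := by
  have hclosed : IsClosed (betaPi ⁻¹' (stoneCechUnit '' Iio N) ∪ C) :=
    (((finite_Iio N).image _).isClosed.preimage continuous_betaPi).union hC
  have hcover : w ∈ betaPi ⁻¹' (stoneCechUnit '' Iio N) ∪ C := by
    refine denseRange_stoneCechUnit.induction_on w hclosed fun p => ?_
    rcases lt_or_ge p.1 N with hp | hp
    · exact Or.inl ⟨p.1, hp, (betaPi_stoneCechUnit p).symm⟩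
    · exact Or.inr (hN p hp)
  refine hcover.resolve_left ?_
  rintro ⟨n, -, hn⟩
  exact hu n (hw.symm.trans hn.symm)

/-- The function `(n, x, y) ↦ 1 / (1 + n x)`. It is `1` on the edge `x = 0`, but for a free
ultrafilter `u` its Stone–Čech extension vanishes on `S_u` wherever `f_u > 0`. -/
def edgeBump : C(bS, I) where
  toFun p := ⟨1 / (1 + p.1 * p.2.1), by
    have : 0 ≤ (p.1 : ℝ) * p.2.1 := mul_nonneg p.1.cast_nonneg p.2.1.2.1
    exact ⟨by positivity, div_le_one_of_le₀ (by linarith) (by linarith)⟩⟩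
  continuous_toFun := by
    have hcast : Continuous fun n : ℕ => (n : ℝ) := continuous_of_discreteTopology
    refine Continuous.subtype_mk (continuous_const.div (by fun_prop) fun p => ?_) _
    have : 0 ≤ (p.1 : ℝ) * p.2.1 := mul_nonneg p.1.cast_nonneg p.2.1.2.1
    positivity

/-- The Stone–Čech extension of `edgeBump`. -/
def betaEdgeBump : StoneCech bS → I :=
  stoneCechExtend edgeBump.continuous

theorem continuous_betaEdgeBump : Continuous betaEdgeBump :=
  continuous_stoneCechExtend _

theorem betaEdgeBump_stoneCechUnit (p : bS) : betaEdgeBump (stoneCechUnit p) = edgeBump p :=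
  stoneCechExtend_stoneCechUnit _ p

theorem betaEdgeBump_betaMap_const_zero (w : StoneCech bS) :
    betaEdgeBump (betaMap (.const I 0) w) = 1 := by
  refine congrFun (stoneCech_hom_ext (continuous_betaEdgeBump.comp (continuous_betaMap _))
    (continuous_const (y := 1)) (funext fun p => ?_)) w
  simp [betaMap_stoneCechUnit, betaEdgeBump_stoneCechUnit, edgeBump]

theorem coe_mul_edgeBump_le {p : bS} {n : ℕ} (hn : n ≤ p.1) :
    (p.2.1 * edgeBump p : ℝ) ≤ 1 / (n + 1) := by
  have hx := p.2.1.2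
  have hn' : (n : ℝ) ≤ p.1 := by exact_mod_cast hn
  have hmul : (n : ℝ) * p.2.1 ≤ p.1 * p.2.1 := mul_le_mul_of_nonneg_right hn' hx.1
  have hnx : 0 ≤ (n : ℝ) * p.2.1 := mul_nonneg n.cast_nonneg hx.1
  change (p.2.1 : ℝ) * (1 / (1 + p.1 * p.2.1)) ≤ 1 / (n + 1)
  rw [mul_one_div, div_le_div_iff₀ (by linarith) (by positivity)]
  linarith [hx.2]

theorem betaF_eq_zero_or_betaEdgeBump_eq_zero (hu : ∀ n, u ≠ stoneCechUnit n) {w : StoneCech bS}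
    (hw : w ∈ Su u) : betaF w = 0 ∨ betaEdgeBump w = 0 := by
  have hle (n : ℕ) : (betaF w * betaEdgeBump w : ℝ) ≤ 1 / (n + 1) := by
    have hclosed : IsClosed {w | (betaF w * betaEdgeBump w : ℝ) ≤ 1 / (n + 1)} :=
      isClosed_le ((continuous_subtype_val.comp continuous_betaF).mul
        (continuous_subtype_val.comp continuous_betaEdgeBump)) continuous_const
    refine mem_of_mem_Su_of_forall_le hu hclosed (N := n) (fun p hp => ?_) hw
    rw [mem_ofPred_eq, betaF_stoneCechUnit, betaEdgeBump_stoneCechUnit]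
    exact coe_mul_edgeBump_le hp
  have hzero : (betaF w * betaEdgeBump w : ℝ) ≤ 0 :=
    ge_of_tendsto' tendsto_one_div_add_atTop_nhds_zero_nat hle
  have hmul : (betaF w * betaEdgeBump w : ℝ) = 0 :=
    hzero.antisymm (mul_nonneg (betaF w).2.1 (betaEdgeBump w).2.1)
  exact (mul_eq_zero.1 hmul).imp Subtype.ext Subtype.ext

theorem levelDeriv_fu_univ_ne_univ (hu : ∀ n, u ≠ stoneCechUnit n) (hne : (Su u).Nonempty) :
    levelDeriv (fu u) univ ≠ univ := by
  obtain ⟨w, hw⟩ := hne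
  let z : Su u := fiberMap u (.const I 0) ⟨w, hw⟩
  have hz_fu : fu u z = 0 := fu_fiberMap u _ _
  have hz_bump : betaEdgeBump z ≠ 0 := by
    rw [show betaEdgeBump z = 1 from betaEdgeBump_betaMap_const_zero w]
    exact one_ne_zero
  have hconst : ∀ᶠ v in 𝓝 z, fu u v = fu u z := by
    have hcont : Continuous fun v : Su u => betaEdgeBump v :=
      continuous_betaEdgeBump.comp continuous_subtype_val
    filter_upwards [hcont.continuousAt.eventually_ne hz_bump] with v hv
    rw [hz_fu]
    exact (betaF_eq_zero_or_betaEdgeBump_eq_zero hu v.2).resolve_right hv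
  intro heq
  have hz : z ∈ levelDeriv (fu u) univ := heq.superset (mem_univ z)
  exact hz.2 (mem_nhdsWithin_of_mem_nhds (hconst.mono fun _ => not_not_intro))

end Fiber

/-- The least ordinal `δ` with `X_δ = X_{δ+1}` has uncountable cofinality; in
particular the supremum of any strictly increasing sequence of ordinals below `δ`
is again below `δ`. -/
theorem delta_uncountable_cofinality (u : StoneCech ℕ)
    (hu : ∀ n : ℕ, u ≠ stoneCechUnit n)
    (hne : (Su u).Nonempty) (hcomp : IsCompact (Su u)) (hconn : IsConnected (Su u))
    (hFsp : IsFSpace (Su u))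
    (hP : ∀ s r : unitInterval, s < r → IsConnected (Pset u s r))
    (δ : Ordinal) (hδ : Xseq u δ = Xseq u (δ + 1))
    (hmin : ∀ β < δ, Xseq u β ≠ Xseq u (β + 1)) :
    Cardinal.aleph0 < δ.cof ∧
    ∀ g : ℕ → Ordinal, StrictMono g → (∀ n, g n < δ) → (⨆ n, g n) < δ := by
  have : CompactSpace (Su u) := isCompact_iff_compactSpace.1 hcomp
  simp only [Xseq_eq_levelDerivSeq] at hδ hmin
  have hδ_ne : δ ≠ 0 := by
    rintro rfl
    rw [levelDerivSeq_add_one, levelDerivSeq_zero] at hδ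
    exact levelDeriv_fu_univ_ne_univ hu hne hδ.symm
  have hacc : ∀ β < δ, AccPt 0 (𝓟 (removedLevels (fu u) β)) := fun β hβ => by
    rw [removedLevels_fu_eq_univ (hmin β hβ)]
    exact PerfectSpace.univ_preperfect 0 (mem_univ 0)
  have hcof : Cardinal.aleph0 < δ.cof := hFsp.aleph0_lt_cof (continuous_fu u) hδ_ne hδ hacc
  refine ⟨hcof, fun g _ hg => Ordinal.lift_iSup_lt_of_lt_cof ?_ hg⟩
  simpa using hcof

end
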